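/- Let Ω and ω be as in the context, assume ω is differentiable on (0,1), fix a point (0, y₀) in the closure of Ω with first coordinate 0, let T_x : ℝ^{n−1} → ℝ^{n−1} be the affine map T_x(y) = y₀ + (ε/x)(y − y₀) for x ∈ (0,1), let Ω_ε(x) = T_x(Ω(x)), and let ω_ε(x) = (ε/x)^{n−1} ω(x) (which equals the (n−1)-dimensional measure of Ω_ε(x)). Then: (a) for ε ≤ x₁ ≤ x₂ ≤ 1−ε, Ω_ε(x₂) is contained in the closure of Ω_ε(x₁); (b) for all x ∈ [ε, 1−ε]: −2(n−1) ω_ε(x)/min(x, 1−x) ≤ ω_ε'(x) ≤ 0. -/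

import Mathlib

open MeasureTheory Set Filter Topology RealInnerProductSpace

noncomputable section

/-- The point `(x, y) ∈ ℝ × ℝ^m ≅ ℝ^{m+1}`. -/
def mkPt (m : ℕ) (x : ℝ) (y : EuclideanSpace ℝ (Fin m)) : EuclideanSpace ℝ (Fin (m+1)) :=
  (EuclideanSpace.equiv (Fin (m+1)) ℝ).symm (Fin.cons x ((EuclideanSpace.equiv (Fin m) ℝ) y))

/-- The cross-section `Ω(s) = {y : (s, y) ∈ Ω}`. -/
def cross {m : ℕ} (Ω : Set (EuclideanSpace ℝ (Fin (m+1)))) (s : ℝ) :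
    Set (EuclideanSpace ℝ (Fin m)) := {y | mkPt m s y ∈ Ω}

/-- `ω(s)`: the (n-1)-dimensional volume of the cross-section `Ω(s)`. -/
def ωvol {m : ℕ} (Ω : Set (EuclideanSpace ℝ (Fin (m+1)))) (s : ℝ) : ℝ :=
  (volume (cross Ω s)).toReal

/-- The Laplacian, as the sum of the pure second derivatives along the standard basis. -/
def lap {k : ℕ} (u : EuclideanSpace ℝ (Fin k) → ℝ) (p : EuclideanSpace ℝ (Fin k)) : ℝ :=
  ∑ i, fderiv ℝ (fun q => fderiv ℝ u q (EuclideanSpace.single i 1)) p (EuclideanSpace.single i 1)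

/-- The cross-sectional average `ū(x)` of `u`. -/
def ubarFn {m : ℕ} (Ω : Set (EuclideanSpace ℝ (Fin (m+1))))
    (u : EuclideanSpace ℝ (Fin (m+1)) → ℝ) (x : ℝ) : ℝ :=
  (∫ y in cross Ω x, u (mkPt m x y)) / ωvol Ω x

lemma mkPt_combo (m : ℕ) (a b x x' : ℝ) (y y' : EuclideanSpace ℝ (Fin m)) :
    a • mkPt m x y + b • mkPt m x' y' = mkPt m (a * x + b * x') (a • y + b • y') := by
  ext i
  refine Fin.cases ?_ (fun j => ?_) i <;> simp [mkPt]

lemma norm_le_mkPt (m : ℕ) (x : ℝ) (y : EuclideanSpace ℝ (Fin m)) : ‖y‖ ≤ ‖mkPt m x y‖ := by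
  rw [EuclideanSpace.norm_eq, EuclideanSpace.norm_eq]
  apply Real.sqrt_le_sqrt
  rw [Fin.sum_univ_succ]
  simp [mkPt]
  positivity

lemma cross_finite {m : ℕ} {Ω : Set (EuclideanSpace ℝ (Fin (m+1)))}
    (hb : Bornology.IsBounded Ω) (s : ℝ) : volume (cross Ω s) ≠ ⊤ := by
  obtain ⟨C, hC⟩ := hb.exists_norm_le
  have : Bornology.IsBounded (cross Ω s) :=
    isBounded_iff_forall_norm_le.2 ⟨C, fun y hy => (norm_le_mkPt m s y).trans (hC _ hy)⟩
  exact this.measure_lt_top.ne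

lemma homothety_vol {m : ℕ} (c : EuclideanSpace ℝ (Fin m)) (r : ℝ) (hr : 0 ≤ r)
    (s : Set (EuclideanSpace ℝ (Fin m))) :
    (volume (AffineMap.homothety c r '' s)).toReal = r ^ m * (volume s).toReal := by
  rw [Measure.addHaar_image_homothety, ENNReal.toReal_mul, ENNReal.toReal_ofReal (abs_nonneg _),
    abs_of_nonneg (by positivity)]
  simp

/-- Cone comparison towards a point of the closure. -/
lemma cone {m : ℕ} {Ω : Set (EuclideanSpace ℝ (Fin (m+1)))} (ho : IsOpen Ω) (hc : Convex ℝ Ω)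
    {t : ℝ} {c : EuclideanSpace ℝ (Fin m)} (h : mkPt m t c ∈ closure Ω)
    {r s s' : ℝ} (hr : 0 < r) (hr1 : r ≤ 1) (hs : s' = (1 - r) * t + r * s) :
    AffineMap.homothety c r '' cross Ω s ⊆ cross Ω s' := by
  rintro _ ⟨y, hy, rfl⟩
  have hy' : mkPt m s y ∈ interior Ω := by rw [ho.interior_eq]; exact hy
  have := hc.combo_closure_interior_mem_interior h hy' (sub_nonneg.2 hr1) hr (by ring)
  rw [ho.interior_eq, mkPt_combo, ← hs] at this
  have e : AffineMap.homothety c r y = (1 - r) • c + r • y := by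
    rw [AffineMap.homothety_apply, vsub_eq_sub, vadd_eq_add]; module
  change mkPt m s' _ ∈ Ω
  rw [e]; exact this

lemma cone_vol {m : ℕ} {Ω : Set (EuclideanSpace ℝ (Fin (m+1)))} (ho : IsOpen Ω) (hc : Convex ℝ Ω)
    (hb : Bornology.IsBounded Ω)
    {t : ℝ} {c : EuclideanSpace ℝ (Fin m)} (h : mkPt m t c ∈ closure Ω)
    {r s s' : ℝ} (hr : 0 < r) (hr1 : r ≤ 1) (hs : s' = (1 - r) * t + r * s) :
    r ^ m * ωvol Ω s ≤ ωvol Ω s' := by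
  unfold ωvol
  rw [← homothety_vol c r hr.le]
  exact ENNReal.toReal_mono (cross_finite hb s') (measure_mono (cone ho hc h hr hr1 hs))

/-- Properties of the rescaled cross-sections `Ω_ε(x) = T_x(Ω(x))`,
`T_x(y) = y₀ + (ε/x)(y - y₀)`: they are decreasing in `x` (up to closure), the rescaled
volume `ω_ε(x) = (ε/x)^{n-1} ω(x)` equals the measure of `Ω_ε(x)`, is nonincreasing, and
satisfies `-2(n-1) ω_ε(x)/min(x,1-x) ≤ ω_ε'(x) ≤ 0` on `[ε, 1-ε]`. -/
theorem rescaled_cross_sections_monotone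
    (m : ℕ) (hm : 1 ≤ m) (Ω : Set (EuclideanSpace ℝ (Fin (m+1))))
    (ε : ℝ) (hε : 0 < ε) (hε' : ε < 1/2)
    (y₀ : EuclideanSpace ℝ (Fin m)) (hy₀ : mkPt m 0 y₀ ∈ closure Ω) :
      IsOpen Ω → Convex ℝ Ω → Bornology.IsBounded Ω →
      -- Ω ⊆ (0,1) × ℝ^{n-1}
      (∀ x y, mkPt m x y ∈ Ω → x ∈ Ioo (0:ℝ) 1) →
      -- nonempty cross-sections
      (∀ s ∈ Ioo (0:ℝ) 1, (cross Ω s).Nonempty) →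
      -- ω differentiable on (0,1)
      (∀ x ∈ Ioo (0:ℝ) 1, DifferentiableAt ℝ (ωvol Ω) x) →
      -- T, Ωε and ωε, defined by their formulas
      ∀ (T : ℝ → EuclideanSpace ℝ (Fin m) → EuclideanSpace ℝ (Fin m))
        (Ωε : ℝ → Set (EuclideanSpace ℝ (Fin m))) (ωε : ℝ → ℝ),
      (∀ x y, T x y = y₀ + (ε / x) • (y - y₀)) →
      (∀ x, Ωε x = T x '' cross Ω x) →
      (∀ x, ωε x = (ε / x) ^ m * ωvol Ω x) →
      -- (ωε agrees with the measure of Ωε)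
      (∀ x ∈ Ioo (0:ℝ) 1, ωε x = (volume (Ωε x)).toReal) ∧
      -- (a) Ωε is decreasing in x
      (∀ x₁ x₂ : ℝ, ε ≤ x₁ → x₁ ≤ x₂ → x₂ ≤ 1 - ε → Ωε x₂ ⊆ closure (Ωε x₁)) ∧
      -- (b) bounds on ωε'
      (∀ x ∈ Icc ε (1 - ε),
        -(2 * m) * ωε x / min x (1 - x) ≤ deriv ωε x ∧ deriv ωε x ≤ 0) := by
  intro ho hc hb hsub hne hd T Ωε ωε hT hΩ hω
  have hTh : ∀ x, T x = AffineMap.homothety y₀ (ε / x) := by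
    intro x; ext1 y
    rw [hT, AffineMap.homothety_apply, vsub_eq_sub, vadd_eq_add, add_comm]
  refine ⟨?_, ?_, ?_⟩
  · intro x hx
    rw [hω, hΩ, hTh, homothety_vol _ _ (div_nonneg hε.le hx.1.le)]; rfl
  · intro x₁ x₂ h1 h12 h2
    have p1 : 0 < x₁ := hε.trans_le h1
    have p2 : 0 < x₂ := p1.trans_le h12
    refine subset_trans ?_ subset_closure
    rw [hΩ, hΩ]
    rintro _ ⟨y, hy, rfl⟩
    refine ⟨AffineMap.homothety y₀ (x₁ / x₂) y,
      cone ho hc hy₀ (div_pos p1 p2) ((div_le_one p2).2 h12) ?_ ⟨y, hy, rfl⟩, ?_⟩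
    · field_simp; ring
    · rw [hT, hT, AffineMap.homothety_apply, vsub_eq_sub, vadd_eq_add, add_sub_cancel_right,
        smul_smul]
      congr 2
      field_simp
  · intro x hx
    have hx0 : 0 < x := hε.trans_le hx.1
    have hx1 : 0 < 1 - x := by linarith [hx.2]
    have hxI : x ∈ Ioo (0:ℝ) 1 := ⟨hx0, by linarith⟩
    have hwd := (hd x hxI).hasDerivAt
    set w' := deriv (ωvol Ω) x with hw'
    have hw0 : 0 ≤ ωvol Ω x := ENNReal.toReal_nonneg
    have hωε : ωε = fun x => (ε / x) ^ m * ωvol Ω x := funext hω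
    have hD : HasDerivAt ωε ((ε / x) ^ m * (w' - m * ωvol Ω x / x)) x := by
      have h1 : HasDerivAt (fun s : ℝ => ε / s) (-(ε / x ^ 2)) x := by
        have := (hasDerivAt_inv hx0.ne').const_mul ε
        simpa [div_eq_mul_inv] using this
      have := (h1.pow m).mul hwd
      rw [hωε]
      refine HasDerivAt.congr_deriv this ?_
      obtain ⟨k, rfl⟩ : ∃ k, m = k + 1 := ⟨m - 1, by omega⟩
      simp only [Nat.add_sub_cancel, Pi.pow_apply]
      simp only [pow_succ (ε / x) k]
      generalize (ε / x) ^ k = P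
      field_simp
      ring
    have hanti : AntitoneOn ωε (Ioo 0 1) := by
      intro a ha b hb' hab
      have := cone_vol ho hc hb hy₀ (div_pos ha.1 hb'.1) ((div_le_one hb'.1).2 hab)
        (s := b) (s' := a) (by have := hb'.1; field_simp; ring)
      rw [hω, hω]
      have e : (ε / b) ^ m = (ε / a) ^ m * (a / b) ^ m := by
        rw [← mul_pow]; congr 1; have := hb'.1; have := ha.1; field_simp
      rw [e, mul_assoc]
      exact mul_le_mul_of_nonneg_left this (pow_nonneg (div_nonneg hε.le ha.1.le) _)
    have hmono : MonotoneOn (fun s => ωvol Ω s / (1 - s) ^ m) (Ioo 0 1) := by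
      intro a ha b hb' hab
      have key : ((1 - b) / (1 - a)) ^ m * ωvol Ω a ≤ ωvol Ω b := by
        have hlim : Tendsto (fun t : ℝ => ((t - b) / (t - a)) ^ m * ωvol Ω a) (𝓝[<] 1)
            (𝓝 (((1 - b) / (1 - a)) ^ m * ωvol Ω a)) := by
          apply Tendsto.mono_left _ nhdsWithin_le_nhds
          apply ContinuousAt.tendsto
            (f := fun t : ℝ => ((t - b) / (t - a)) ^ m * ωvol Ω a)
          have : (1:ℝ) - a ≠ 0 := by linarith [ha.2]
          fun_prop (disch := assumption)
        refine le_of_tendsto hlim ?_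
        filter_upwards [Ioo_mem_nhdsLT hb'.2] with t ht
        obtain ⟨c, hcm⟩ := hne t ⟨hb'.1.trans ht.1, ht.2⟩
        have q1 : 0 < t - b := by linarith [ht.1]
        have q2 : 0 < t - a := by linarith [ht.1]
        refine cone_vol ho hc hb (subset_closure hcm) (div_pos q1 q2)
          ((div_le_one q2).2 (by linarith)) ?_
        field_simp; ring
      have q1 : 0 < 1 - a := by linarith [ha.2]
      have q2 : 0 < 1 - b := by linarith [hb'.2]
      change ωvol Ω a / (1 - a) ^ m ≤ ωvol Ω b / (1 - b) ^ m
      rw [div_pow, div_mul_eq_mul_div, div_le_iff₀ (by positivity)] at key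
      rw [div_le_div_iff₀ (by positivity) (by positivity)]
      linarith
    have hG : HasDerivAt (fun s => ωvol Ω s / (1 - s) ^ m)
        ((w' + m * ωvol Ω x / (1 - x)) / (1 - x) ^ m) x := by
      have h1 : HasDerivAt (fun s : ℝ => 1 - s) (-1) x := by
        simpa using (hasDerivAt_id x).const_sub 1
      have := hwd.div (h1.pow m) (pow_pos hx1 m).ne'
      refine HasDerivAt.congr_deriv this ?_
      obtain ⟨k, rfl⟩ : ∃ k, m = k + 1 := ⟨m - 1, by omega⟩
      simp only [Nat.add_sub_cancel, Pi.pow_apply]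
      rw [pow_succ]
      field_simp
      ring
    have hn : Ioo (0:ℝ) 1 ∈ 𝓝 x := Ioo_mem_nhds hxI.1 hxI.2
    have hu := hanti.derivWithin_nonpos (x := x)
    rw [derivWithin_of_mem_nhds hn] at hu
    refine ⟨?_, hu⟩
    have hl := hmono.derivWithin_nonneg (x := x)
    rw [derivWithin_of_mem_nhds hn, hG.deriv] at hl
    have hl' : 0 ≤ w' + m * ωvol Ω x / (1 - x) := by
      have := mul_nonneg hl (pow_pos hx1 m).le
      rwa [div_mul_cancel₀ _ (pow_pos hx1 m).ne'] at this
    rw [hD.deriv, hω]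
    have hmin : 0 < min x (1 - x) := lt_min hx0 hx1
    have hmw : 0 ≤ m * ωvol Ω x := by positivity
    have b1 := div_le_div_of_nonneg_left hmw hmin (min_le_left x (1 - x))
    have b2 := div_le_div_of_nonneg_left hmw hmin (min_le_right x (1 - x))
    have e : -(2 * (m:ℝ)) * ((ε / x) ^ m * ωvol Ω x) / min x (1 - x)
        = (ε / x) ^ m * (-2 * (m * ωvol Ω x / min x (1 - x))) := by ring
    rw [e]
    refine mul_le_mul_of_nonneg_left ?_ (by positivity)
    linarith
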